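/- arXiv:2212.09087 — 2 statements merged into one kernel-verified Lean document; each statement's English description precedes it below -/
import Mathlib

section
/- Let A be a commutative Noetherian ring and let I be an ideal of A containing a nonzerodivisor of A. Then there is an isomorphism of A-modules Ext^1_A(A/I, A) ≅ (A : I)/A, where (A : I) = {x ∈ Q(A) : xI ⊆ A} and Q(A) is the total ring of fractions of A. -/
/-!
For a presentation `0 → L → P → M → 0` with `P` projective, `Ext¹(M, N)` is the cokernel of the
restriction map `Hom(P, N) → Hom(L, N)`. Apply this to `0 → I → A → A ⧸ I → 0`. If `s ∈ I` is
invertible in an overring `K` of `A`, such as `Q(A)`, then every linear `f : I → A` satisfies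
`s * f i = f (s * i) = i * f s`, so it is multiplication by the fraction `f s / s` of `K`; hence
`Hom(I, A) ≅ (A : I)`, and the restrictions of linear maps `A → A` correspond to the elements of
`A`.
-/

set_option maxHeartbeats 1000000
set_option synthInstance.maxHeartbeats 400000

open CategoryTheory

universe u

/-- The `i`-th Ext module `Ext_A^i(M, N)` over a commutative ring `A`. -/
noncomputable def ExtModule (A : Type u) [CommRing A] (M N : Type u)
    [AddCommGroup M] [Module A M] [AddCommGroup N] [Module A N] (i : ℕ) : ModuleCat.{u} A :=
  ((Ext A (ModuleCat.{u} A) i).obj (Opposite.op (ModuleCat.of A M))).obj (ModuleCat.of A N)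

/-- A module is torsion-free if nonzerodivisors of the ring act injectively. -/
def IsTorsionFreeModule (A : Type*) [CommRing A] (M : Type*) [AddCommGroup M]
    [Module A M] : Prop :=
  ∀ a ∈ nonZeroDivisors A, ∀ m : M, a • m = 0 → m = 0

/-- The grade of an ideal `J`: the length of a maximal regular sequence contained in `J`. -/
noncomputable def Ideal.grade {A : Type*} [CommRing A] (J : Ideal A) : ℕ∞ :=
  sSup {n : ℕ∞ | ∃ rs : List A, (rs.length : ℕ∞) = n ∧ (∀ r ∈ rs, r ∈ J) ∧
    RingTheory.Sequence.IsWeaklyRegular A rs}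

/-- A Cohen–Macaulay local ring: Noetherian local with depth equal to Krull dimension. -/
def IsCohenMacaulayLocalRing (A : Type*) [CommRing A] : Prop :=
  IsNoetherianRing A ∧ ∃ _ : IsLocalRing A,
    ((IsLocalRing.maximalIdeal A).grade : WithBot ℕ∞) = ringKrullDim A

/-- A Cohen–Macaulay ring: Noetherian, all localizations at primes are CM local rings. -/
def IsCohenMacaulayRing (A : Type*) [CommRing A] : Prop :=
  IsNoetherianRing A ∧ ∀ (p : Ideal A) [p.IsPrime],
    IsCohenMacaulayLocalRing (Localization.AtPrime p)

/-- A Gorenstein local ring: Noetherian local of finite self-injective dimension,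
expressed via vanishing of `Ext^{n+1}(A/I, A)` for all ideals `I` (Baer's criterion). -/
def IsGorensteinLocalRing (A : Type u) [CommRing A] : Prop :=
  IsLocalRing A ∧ IsNoetherianRing A ∧
    ∃ n : ℕ, ∀ I : Ideal A, Subsingleton (ExtModule A (A ⧸ I) A (n + 1))

/-- A Gorenstein ring: Noetherian, all localizations at maximal ideals are Gorenstein local. -/
def IsGorensteinRing (A : Type u) [CommRing A] : Prop :=
  IsNoetherianRing A ∧ ∀ (m : Ideal A) [m.IsMaximal],
    IsGorensteinLocalRing (Localization.AtPrime m)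

/-- Generically Gorenstein: the localization at every associated prime is Gorenstein. -/
def IsGenericallyGorenstein (A : Type u) [CommRing A] : Prop :=
  ∀ (p : Ideal A) [p.IsPrime], p ∈ associatedPrimes A A →
    IsGorensteinLocalRing (Localization.AtPrime p)

/-- The trace ideal of a module: the sum of the images of all linear maps to the ring. -/
def traceIdeal (A : Type*) [CommRing A] (M : Type*) [AddCommGroup M] [Module A M] :
    Ideal A :=
  ⨆ f : M →ₗ[A] A, LinearMap.range f

/-- The image of an ideal inside the total ring of fractions. -/
noncomputable def Ideal.toFrac {A : Type u} [CommRing A] (I : Ideal A) :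
    Submodule A (FractionRing A) :=
  Submodule.map (Algebra.linearMap A (FractionRing A)) I

/-- The conductor `(R : S)` of a birational extension `R ⊆ S ⊆ Q(R)`,
as a submodule of the total ring of fractions. -/
noncomputable def conductorFrac (R : Type u) [CommRing R]
    (S : Subalgebra R (FractionRing R)) : Submodule R (FractionRing R) :=
  (1 : Submodule R (FractionRing R)) / Subalgebra.toSubmodule S

/-- `M ∈ Ω CM(A)`: there is an exact sequence `0 → M → P → N → 0` with `P` a finitely
generated projective `A`-module and `N` a finitely generated torsion-free
(equivalently, over a 1-dimensional CM ring, maximal Cohen–Macaulay) `A`-module. -/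
def InSyzygyOfCM (A : Type u) [CommRing A] (M : Type u) [AddCommGroup M] [Module A M] :
    Prop :=
  ∃ (P N : Type u) (_ : AddCommGroup P) (_ : Module A P) (_ : AddCommGroup N)
    (_ : Module A N), Module.Projective A P ∧ Module.Finite A P ∧ Module.Finite A N ∧
      IsTorsionFreeModule A N ∧
      ∃ (f : M →ₗ[A] P) (g : P →ₗ[A] N),
        Function.Injective f ∧ Function.Surjective g ∧ LinearMap.range f = LinearMap.ker g

/-- An injective linear map `j` with range `U` identifies `V / j⁻¹(W)` with `U / (U ∩ W)`. -/
noncomputable def quotientComapEquivOfRangeEq {A V X : Type*} [Ring A] [AddCommGroup V]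
    [Module A V] [AddCommGroup X] [Module A X] (j : V →ₗ[A] X) (hj : Function.Injective j)
    {U : Submodule A X} (hU : LinearMap.range j = U) (W : Submodule A X) :
    (V ⧸ W.comap j) ≃ₗ[A] U ⧸ W.comap U.subtype :=
  let e := LinearEquiv.ofInjective j hj ≪≫ₗ LinearEquiv.ofEq _ _ hU
  Submodule.Quotient.equiv _ _ e
    (Submodule.map_comap_eq_of_surjective e.surjective (W.comap U.subtype))

section RestrictionCokernel

variable {A P P' : Type*} [CommRing A] [AddCommGroup P] [Module A P] [AddCommGroup P']
  [Module A P']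

/-- The cokernel of the restriction map `Hom(P, N) → Hom(K, N)` for a submodule `K` of `P`. If `P`
is projective, this is `Ext¹(P / K, N)`. -/
abbrev RestrictionCokernel (K : Submodule A P) (N : Type*) [AddCommGroup N] [Module A N] : Type _ :=
  (K →ₗ[A] N) ⧸ LinearMap.range (LinearMap.lcomp A N K.subtype)

theorem range_lcomp_rangeRestrict {P'' : Type*} [AddCommGroup P''] [Module A P'']
    (N : Type*) [AddCommGroup N] [Module A N] {d₂ : P'' →ₗ[A] P} {d₁ : P →ₗ[A] P'}
    (h : LinearMap.range d₂ = LinearMap.ker d₁) :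
    LinearMap.range (LinearMap.lcomp A N d₁.rangeRestrict) =
      LinearMap.ker (LinearMap.lcomp A N d₂) :=
  (LinearMap.exact_iff.1 (LinearMap.exact_lcomp_of_exact_of_surjective N
    (LinearMap.exact_iff.2 (d₁.ker_rangeRestrict.trans h.symm)) d₁.surjective_rangeRestrict)).symm

theorem comap_range_lcomp_rangeRestrict (N : Type*) [AddCommGroup N] [Module A N]
    (d : P →ₗ[A] P') :
    (LinearMap.range (LinearMap.lcomp A N d)).comap (LinearMap.lcomp A N d.rangeRestrict) =
      LinearMap.range (LinearMap.lcomp A N (LinearMap.range d).subtype) := by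
  have hfactor : LinearMap.lcomp A N d =
      LinearMap.lcomp A N d.rangeRestrict ∘ₗ LinearMap.lcomp A N (LinearMap.range d).subtype := rfl
  rw [hfactor, LinearMap.range_comp, Submodule.comap_map_eq_of_injective
    (LinearMap.lcomp_injective_of_surjective _ d.surjective_rangeRestrict)]

namespace RestrictionCokernel

variable (N : Type*) [AddCommGroup N] [Module A N] {K : Submodule A P} {K' : Submodule A P'}

/-- The contravariant functoriality of `RestrictionCokernel` in the pair `(P, K)`. -/
def map (φ : P →ₗ[A] P') (hφ : K ≤ K'.comap φ) :
    RestrictionCokernel K' N →ₗ[A] RestrictionCokernel K N :=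
  Submodule.mapQ _ _ (LinearMap.lcomp A N (φ.restrict hφ)) <| by
    rintro _ ⟨g, rfl⟩
    exact ⟨g ∘ₗ φ, rfl⟩

theorem map_comp_map_eq_id (φ : P →ₗ[A] P') (hφ : K ≤ K'.comap φ) (ψ : P' →ₗ[A] P)
    (hψ : K' ≤ K.comap ψ) (h : ∀ x, ψ (φ x) - x ∈ K) :
    map N φ hφ ∘ₗ map N ψ hψ = LinearMap.id := by
  refine Submodule.linearMap_qext _ (LinearMap.ext fun f => (Submodule.Quotient.eq _).2 ?_)
  refine ⟨f ∘ₗ (ψ ∘ₗ φ - LinearMap.id).codRestrict K h, LinearMap.ext fun x => ?_⟩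
  exact map_sub f ⟨ψ (φ x), hψ (hφ x.2)⟩ x

/-- As in Schanuel's lemma, lifts in both directions are inverse up to maps into the kernels. -/
theorem nonempty_equiv_of_projective {M : Type*} [AddCommGroup M] [Module A M]
    [Module.Projective A P] [Module.Projective A P'] (ε : P →ₗ[A] M) (hε : Function.Surjective ε)
    (ε' : P' →ₗ[A] M) (hε' : Function.Surjective ε') :
    Nonempty (RestrictionCokernel (LinearMap.ker ε) N ≃ₗ[A]
      RestrictionCokernel (LinearMap.ker ε') N) := by
  obtain ⟨φ, hφ⟩ := Module.projective_lifting_property ε' ε hε'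
  obtain ⟨ψ, hψ⟩ := Module.projective_lifting_property ε ε' hε
  have hφ' (x) : ε' (φ x) = ε x := LinearMap.congr_fun hφ x
  have hψ' (x) : ε (ψ x) = ε' x := LinearMap.congr_fun hψ x
  have hφK : LinearMap.ker ε ≤ (LinearMap.ker ε').comap φ := fun x hx => by simpa [hφ'] using hx
  have hψK : LinearMap.ker ε' ≤ (LinearMap.ker ε).comap ψ := fun x hx => by simpa [hψ'] using hx
  exact ⟨LinearEquiv.ofLinearMap (map N ψ hψK) (map N φ hφK)
    (map_comp_map_eq_id N ψ hψK φ hφK fun x => by simp [hφ', hψ'])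
    (map_comp_map_eq_id N φ hφK ψ hψK fun x => by simp [hφ', hψ'])⟩

end RestrictionCokernel

end RestrictionCokernel

section Ext

/-- An injective linear map onto the cycles computes the homology of a short complex of modules. -/
noncomputable def homologyEquivOfRangeEqKer {A V : Type*} [Ring A] [AddCommGroup V] [Module A V]
    (S : ShortComplex (ModuleCat.{u} A)) (j : V →ₗ[A] S.X₂) (hj : Function.Injective j)
    (hrange : LinearMap.range j = LinearMap.ker S.g.hom) :
    S.homology ≃ₗ[A] V ⧸ (LinearMap.range S.f.hom).comap j :=
  S.moduleCatHomologyIso.toLinearEquiv ≪≫ₗ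
    Submodule.quotEquivOfEq _ _ (LinearMap.range_codRestrict _ _ _) ≪≫ₗ
    (quotientComapEquivOfRangeEq j hj hrange _).symm

variable {A : Type u} [CommRing A]

theorem nonempty_linearYonedaObj_homology_one_equiv (C : ChainComplex (ModuleCat.{u} A) ℕ)
    (h : LinearMap.range (C.d 2 1).hom = LinearMap.ker (C.d 1 0).hom)
    (N : Type u) [AddCommGroup N] [Module A N] :
    Nonempty ((C.linearYonedaObj A (ModuleCat.of A N)).homology 1 ≃ₗ[A]
      RestrictionCokernel (LinearMap.range (C.d 1 0).hom) N) := by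
  let d₁ := (C.d 1 0).hom
  let d₂ := (C.d 2 1).hom
  let S := (C.linearYonedaObj A (ModuleCat.of A N)).sc' 0 1 2
  let j : (LinearMap.range d₁ →ₗ[A] N) →ₗ[A] S.X₂ :=
    (ModuleCat.homLinearEquiv (M := C.X 1) (N := ModuleCat.of A N)
      (S := A)).symm.toLinearMap ∘ₗ LinearMap.lcomp A N d₁.rangeRestrict
  have hj : Function.Injective j := (ModuleCat.homLinearEquiv (S := A)).symm.injective.comp
    (LinearMap.lcomp_injective_of_surjective _ d₁.surjective_rangeRestrict)
  have hker : LinearMap.range j = LinearMap.ker S.g.hom := by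
    have hcycles := range_lcomp_rangeRestrict N h
    ext f
    constructor
    · rintro ⟨g, rfl⟩
      exact ModuleCat.hom_ext (hcycles.le ⟨g, rfl⟩)
    · intro hf
      obtain ⟨g, hg⟩ := hcycles.ge (congrArg ModuleCat.Hom.hom hf : f.hom ∘ₗ d₂ = 0)
      exact ⟨g, ModuleCat.hom_ext hg⟩
  have hcoboundary : (LinearMap.range S.f.hom).comap j =
      LinearMap.range (LinearMap.lcomp A N (LinearMap.range d₁).subtype) := by
    rw [← comap_range_lcomp_rangeRestrict]
    ext f
    exact ⟨fun ⟨g, hg⟩ => ⟨g.hom, congrArg ModuleCat.Hom.hom hg⟩,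
      fun ⟨g, hg⟩ => ⟨ModuleCat.ofHom g, ModuleCat.hom_ext hg⟩⟩
  let homologyIso :=
    (C.linearYonedaObj A (ModuleCat.of A N)).homologyIsoSc' 0 1 2 (by simp) (by simp)
  exact ⟨homologyIso.toLinearEquiv ≪≫ₗ homologyEquivOfRangeEqKer S j hj hker ≪≫ₗ
    Submodule.quotEquivOfEq _ _ hcoboundary⟩

variable {M : Type u} [AddCommGroup M] [Module A M] (N : Type u) [AddCommGroup N] [Module A N]

theorem nonempty_extModule_one_equiv_of_resolution (P : ProjectiveResolution (ModuleCat.of A M)) :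
    Nonempty (ExtModule A M N 1 ≃ₗ[A]
      RestrictionCokernel (LinearMap.ker (P.π.f 0).hom) N) := by
  obtain ⟨e⟩ := nonempty_linearYonedaObj_homology_one_equiv P.complex
    (P.exact_succ 0).moduleCat_range_eq_ker N
  rw [← P.exact₀.moduleCat_range_eq_ker]
  exact ⟨(P.isoExt 1 (ModuleCat.of A N)).toLinearEquiv ≪≫ₗ e⟩

theorem nonempty_extModule_one_equiv {F : Type*} [AddCommGroup F] [Module A F]
    [Module.Projective A F] (ε : F →ₗ[A] M) (hε : Function.Surjective ε) :
    Nonempty (ExtModule A M N 1 ≃ₗ[A] RestrictionCokernel (LinearMap.ker ε) N) := by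
  let P := ProjectiveResolution.of (ModuleCat.of A M)
  have : Module.Projective A (P.complex.X 0) :=
    (IsProjective.iff_projective _).2 (P.projective 0)
  obtain ⟨e⟩ := nonempty_extModule_one_equiv_of_resolution N P
  obtain ⟨e'⟩ := RestrictionCokernel.nonempty_equiv_of_projective N (P.π.f 0).hom
    ((ModuleCat.epi_iff_surjective (P.π.f 0)).1 inferInstance) ε hε
  exact ⟨e ≪≫ₗ e'⟩

end Ext

section Colon

variable {A K : Type*} [CommRing A] [CommRing K] [Algebra A K] {I : Ideal A}

/-- The fraction `f s / s` by which a linear map `f : I → A` multiplies, for an `s ∈ I` that is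
invertible in `K`. -/
noncomputable def evalDiv (s : I) (hs : IsUnit (algebraMap A K s)) : (I →ₗ[A] A) →ₗ[A] K :=
  LinearMap.toSpanSingleton A K ↑hs.unit⁻¹ ∘ₗ LinearMap.applyₗ s

variable (s : I) (hs : IsUnit (algebraMap A K s))

theorem evalDiv_mul_algebraMap (f : I →ₗ[A] A) (i : I) :
    evalDiv s hs f * algebraMap A K i = algebraMap A K (f i) := by
  have hcomm : f s * i = s * f i := by
    rw [mul_comm, ← smul_eq_mul, ← smul_eq_mul, ← map_smul, ← map_smul]
    exact congrArg f (Subtype.ext (mul_comm _ _))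
  calc evalDiv s hs f * algebraMap A K i
      = algebraMap A K (f s * i) * ↑hs.unit⁻¹ := by
        simp only [evalDiv, LinearMap.comp_apply, LinearMap.applyₗ_apply_apply,
          LinearMap.toSpanSingleton_apply, Algebra.smul_def, map_mul]
        ring
    _ = algebraMap A K (f i) := by
        rw [hcomm, map_mul, mul_right_comm, hs.mul_val_inv, one_mul]

theorem evalDiv_eq_iff (f : I →ₗ[A] A) (x : K) :
    evalDiv s hs f = x ↔ ∀ i : I, algebraMap A K (f i) = x * algebraMap A K i := by
  refine ⟨fun h i => by rw [← h, evalDiv_mul_algebraMap], fun h => hs.mul_right_cancel ?_⟩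
  rw [evalDiv_mul_algebraMap, h]

variable [FaithfulSMul A K]

theorem evalDiv_injective : Function.Injective (evalDiv s hs) := fun f g h =>
  LinearMap.ext fun i => FaithfulSMul.algebraMap_injective A K <| by
    rw [← evalDiv_mul_algebraMap s hs, ← evalDiv_mul_algebraMap s hs, h]

theorem range_evalDiv :
    LinearMap.range (evalDiv s hs) = 1 / IsLocalization.coeSubmodule K I := by
  ext x
  rw [Submodule.mem_div_iff_forall_mul_mem]
  constructor
  · rintro ⟨f, rfl⟩ _ ⟨i, hi, rfl⟩
    exact Submodule.mem_one.2 ⟨f ⟨i, hi⟩, (evalDiv_mul_algebraMap s hs f ⟨i, hi⟩).symm⟩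
  · intro hx
    have hmul (i : I) : x * algebraMap A K i ∈ LinearMap.range (Algebra.linearMap A K) := by
      rw [← Submodule.one_eq_range]
      exact hx _ (Submodule.mem_map_of_mem i.2)
    let f : I →ₗ[A] A := LinearMap.codRestrictOfInjective
      (LinearMap.mulLeft A x ∘ₗ Algebra.linearMap A K ∘ₗ I.subtype) (Algebra.linearMap A K)
      (FaithfulSMul.algebraMap_injective A K) hmul
    have hf (i : I) : Algebra.linearMap A K (f i) = x * algebraMap A K i :=
      LinearMap.codRestrictOfInjective_comp_apply ..
    exact ⟨f, (evalDiv_eq_iff s hs f x).2 hf⟩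

theorem comap_evalDiv_one :
    (1 : Submodule A K).comap (evalDiv s hs) = LinearMap.range (LinearMap.lcomp A A I.subtype) := by
  ext f
  simp only [Submodule.mem_comap, Submodule.mem_one]
  constructor
  · rintro ⟨a, ha⟩
    refine ⟨LinearMap.mulLeft A a, LinearMap.ext fun i => FaithfulSMul.algebraMap_injective A K ?_⟩
    rw [(evalDiv_eq_iff s hs f _).1 ha.symm i, ← map_mul]
    rfl
  · rintro ⟨g, rfl⟩
    refine ⟨g 1, Eq.symm ((evalDiv_eq_iff s hs _ _).2 fun i => ?_)⟩
    rw [← map_mul, mul_comm, ← smul_eq_mul, ← map_smul, smul_eq_mul, mul_one]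
    rfl

theorem nonempty_restrictionCokernel_equiv_colon_mod (hI : ∃ a ∈ I, IsUnit (algebraMap A K a)) :
    Nonempty (RestrictionCokernel I A ≃ₗ[A]
      ↥((1 : Submodule A K) / IsLocalization.coeSubmodule K I) ⧸
        (1 : Submodule A K).comap (1 / IsLocalization.coeSubmodule K I).subtype) := by
  obtain ⟨s, hsI, hs⟩ := hI
  exact ⟨Submodule.quotEquivOfEq _ _ (comap_evalDiv_one ⟨s, hsI⟩ hs).symm ≪≫ₗ
    quotientComapEquivOfRangeEq _ (evalDiv_injective ⟨s, hsI⟩ hs) (range_evalDiv ⟨s, hsI⟩ hs) 1⟩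

end Colon

theorem ext_one_iso_colon_mod_general (A : Type u) [CommRing A] (K : Type*) [CommRing K]
    [Algebra A K] [FaithfulSMul A K] (I : Ideal A) (hI : ∃ a ∈ I, IsUnit (algebraMap A K a)) :
    Nonempty (ExtModule A (A ⧸ I) A 1 ≃ₗ[A]
      ↥((1 : Submodule A K) / IsLocalization.coeSubmodule K I) ⧸
        (1 : Submodule A K).comap (1 / IsLocalization.coeSubmodule K I).subtype) := by
  obtain ⟨e⟩ := nonempty_extModule_one_equiv A I.mkQ I.mkQ_surjective
  rw [I.ker_mkQ] at e
  obtain ⟨e'⟩ := nonempty_restrictionCokernel_equiv_colon_mod hI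
  exact ⟨e ≪≫ₗ e'⟩

/-- `Ext¹_A(A/I, A) ≅ (A : I)/A` for an ideal `I` containing a
nonzerodivisor of the commutative Noetherian ring `A`. -/
theorem ext_one_iso_colon_mod (A : Type u) [CommRing A] [IsNoetherianRing A]
    (I : Ideal A) (hreg : ∃ a ∈ I, a ∈ nonZeroDivisors A) :
    Nonempty ((↥(ExtModule A (A ⧸ I) A 1)) ≃ₗ[A]
      ((↥((1 : Submodule A (FractionRing A)) / I.toFrac)) ⧸
        Submodule.comap ((1 : Submodule A (FractionRing A)) / I.toFrac).subtype
          (1 : Submodule A (FractionRing A)))) := by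
  obtain ⟨a, haI, ha⟩ := hreg
  exact ext_one_iso_colon_mod_general A (FractionRing A) I
    ⟨a, haI, IsLocalization.map_units (FractionRing A) ⟨a, ha⟩⟩
end

section
/- Let R be a generically Gorenstein local Cohen–Macaulay Noetherian ring of dimension 1 and let R ⊆ S ⊆ Q(R) be a module finite birational extension. Then S ≅ Hom_R(S, R) as R-modules if and only if Ω CM(S) = CM(S) ∩ Ω CM(R), i.e. a finitely generated S-module lies in Ω CM(S) exactly when it is a torsion-free S-module lying in Ω CM(R). -/
set_option maxHeartbeats 1000000
set_option synthInstance.maxHeartbeats 400000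

open CategoryTheory

universe u

/-!
A module `M` lies in `Ω CM(A)` exactly when it embeds into some `Aⁿ` with torsion-free cokernel.

Suppose `S ≅ Hom_R(S, R)`. Such an embedding `M → Rⁿ` of an `S`-module induces the embedding
`m ↦ (s ↦ f (s • m))` of `M` into `Hom_R(S, Rⁿ) ≅ Sⁿ`, again with torsion-free cokernel.

Conversely, let `c = R : S` be the conductor, which is isomorphic to `Hom_R(S, R)`. If
`Ω CM(S) = CM(S) ∩ Ω CM(R)`, then `c` lies in `Ω CM(S)`, so it is reflexive over `S`, and every
fractional ideal `D` in `Ω CM(S)` is reflexive over `R`, which reads `c : (c : D) = D`. For `D = S`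
this gives `c : c = S`, so `J = c (S : c)` satisfies `c : J = S : (S : c) = c`; for `D` the double
dual of `J` it then gives `1 ∈ D`, that is `S : J = S`. In dimension one a proper ideal containing a
nonzerodivisor `a` lies in an associated prime of `S ⧸ (a)`, so its dual is strictly larger than
`S`. Hence `J = S`, the ideal `c` is invertible, and over the semilocal ring `S` it is free.
-/

open scoped nonZeroDivisors

section SaturatedEmbedding

variable {A M N P : Type*} [CommRing A] [AddCommGroup M] [Module A M]
  [AddCommGroup N] [Module A N] [AddCommGroup P] [Module A P]

theorem isTorsionFreeModule_iff : IsTorsionFreeModule A M ↔ Module.IsTorsionFree A M := by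
  refine ⟨fun h => ⟨fun a ha => ?_⟩, fun _ a ha m => ?_⟩
  · exact isSMulRegular_iff_right_eq_zero_of_smul.mpr (h a ha.mem_nonZeroDivisors)
  · exact (isRegular_iff_mem_nonZeroDivisors.mpr ha).smul_eq_zero_iff_right.mp

/-- An injective linear map whose cokernel is torsion-free, stated without forming the cokernel. -/
structure IsSaturatedEmbedding (f : M →ₗ[A] N) : Prop where
  injective : Function.Injective f
  mem_range_of_smul_mem : ∀ a : A, IsRegular a →
    ∀ v, a • v ∈ LinearMap.range f → v ∈ LinearMap.range f

namespace IsSaturatedEmbedding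

theorem iff_isTorsionFree_quotient {f : M →ₗ[A] N} :
    IsSaturatedEmbedding f ↔
      Function.Injective f ∧ Module.IsTorsionFree A (N ⧸ LinearMap.range f) := by
  rw [← isTorsionFreeModule_iff]
  refine ⟨fun hf => ⟨hf.injective, fun a ha x hx => ?_⟩, fun ⟨hf, hN⟩ => ⟨hf, fun a ha v hv => ?_⟩⟩
  · induction x using Submodule.Quotient.induction_on with | H v => ?_
    rw [← Submodule.Quotient.mk_smul, Submodule.Quotient.mk_eq_zero] at hx
    exact (Submodule.Quotient.mk_eq_zero _).mpr
      (hf.mem_range_of_smul_mem a (isRegular_iff_mem_nonZeroDivisors.mpr ha) v hx)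
  · rw [← Submodule.Quotient.mk_eq_zero] at hv ⊢
    exact hN a ha.mem_nonZeroDivisors _ hv

theorem of_linearEquiv (e : M ≃ₗ[A] N) : IsSaturatedEmbedding e.toLinearMap :=
  ⟨e.injective, fun _ _ v _ => e.surjective v⟩

theorem of_leftInverse [Module.IsTorsionFree A N] {f : M →ₗ[A] N} {g : N →ₗ[A] M}
    (h : Function.LeftInverse g f) : IsSaturatedEmbedding f := by
  refine ⟨h.injective, fun a ha v ⟨m, hm⟩ => ⟨g v, ha.smul_right_inj.mp ?_⟩⟩
  rw [← map_smul, ← map_smul, ← hm, h m]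

theorem comp {g : N →ₗ[A] P} {f : M →ₗ[A] N} (hg : IsSaturatedEmbedding g)
    (hf : IsSaturatedEmbedding f) : IsSaturatedEmbedding (g ∘ₗ f) := by
  refine ⟨hg.injective.comp hf.injective, fun a ha v ⟨m, hm⟩ => ?_⟩
  obtain ⟨n, rfl⟩ := hg.mem_range_of_smul_mem a ha v ⟨f m, hm⟩
  rw [← map_smul] at hm
  obtain ⟨m', rfl⟩ := hf.mem_range_of_smul_mem a ha n ⟨m, hg.injective hm⟩
  exact ⟨m', rfl⟩

theorem compLeft {f : M →ₗ[A] N} (hf : IsSaturatedEmbedding f) (ι : Type*) :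
    IsSaturatedEmbedding (f.compLeft ι) := by
  refine ⟨hf.injective.comp_left, fun a ha v ⟨m, hm⟩ => ?_⟩
  choose w hw using fun k => hf.mem_range_of_smul_mem a ha (v k) ⟨m k, congrFun hm k⟩
  exact ⟨w, funext hw⟩

theorem dualMap {f : M →ₗ[A] N} (hf : Function.Surjective f) :
    IsSaturatedEmbedding f.dualMap := by
  refine ⟨LinearMap.dualMap_injective_of_surjective hf, fun a ha φ hφ => ?_⟩
  rw [LinearMap.range_dualMap_eq_dualAnnihilator_ker_of_surjective f hf,
    Submodule.mem_dualAnnihilator] at hφ ⊢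
  exact fun x hx => ha.smul_eq_zero_iff_right.mp (hφ x hx)

end IsSaturatedEmbedding

end SaturatedEmbedding

namespace InSyzygyOfCM

variable {A M N : Type u} [CommRing A] [AddCommGroup M] [Module A M] [AddCommGroup N] [Module A N]

theorem of_isSaturatedEmbedding {P : Type u} [AddCommGroup P] [Module A P]
    [Module.Projective A P] [Module.Finite A P] {f : M →ₗ[A] P} (hf : IsSaturatedEmbedding f) :
    InSyzygyOfCM A M :=
  ⟨P, P ⧸ LinearMap.range f, inferInstance, inferInstance, inferInstance, inferInstance,
    inferInstance, inferInstance, inferInstance,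
    isTorsionFreeModule_iff.mpr (IsSaturatedEmbedding.iff_isTorsionFree_quotient.mp hf).2,
    f, (LinearMap.range f).mkQ, hf.injective, Submodule.mkQ_surjective _,
    (Submodule.ker_mkQ _).symm⟩

theorem iff_exists_isSaturatedEmbedding :
    InSyzygyOfCM A M ↔ ∃ (n : ℕ) (f : M →ₗ[A] Fin n → A), IsSaturatedEmbedding f := by
  refine ⟨?_, fun ⟨n, f, hf⟩ => of_isSaturatedEmbedding hf⟩
  rintro ⟨P, N, _, _, _, _, _, _, _, hN, f, g, hf, -, hfg⟩
  have hf : IsSaturatedEmbedding f := by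
    refine ⟨hf, fun a ha v hv => ?_⟩
    rw [hfg, LinearMap.mem_ker] at hv ⊢
    exact hN a ha.mem_nonZeroDivisors _ (by rwa [← map_smul])
  obtain ⟨n, π, i, hi⟩ := Module.Finite.exists_comp_eq_id_of_projective A P
  exact ⟨n, i ∘ₗ f, (IsSaturatedEmbedding.of_leftInverse (LinearMap.congr_fun hi.2.2)).comp hf⟩

theorem of_linearEquiv (e : M ≃ₗ[A] N) (h : InSyzygyOfCM A M) : InSyzygyOfCM A N := by
  obtain ⟨n, f, hf⟩ := iff_exists_isSaturatedEmbedding.mp h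
  exact iff_exists_isSaturatedEmbedding.mpr ⟨n, _, hf.comp (.of_linearEquiv e.symm)⟩

theorem isTorsionFree (h : InSyzygyOfCM A M) : Module.IsTorsionFree A M := by
  obtain ⟨n, f, hf⟩ := iff_exists_isSaturatedEmbedding.mp h
  exact hf.injective.moduleIsTorsionFree f (map_smul f)

variable (A M) in
theorem of_projective [Module.Projective A M] [Module.Finite A M] : InSyzygyOfCM A M :=
  of_isSaturatedEmbedding (.of_linearEquiv (.refl A M))

variable (A M) in
theorem dual [Module.Finite A M] : InSyzygyOfCM A (M →ₗ[A] A) := by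
  obtain ⟨n, π, hπ⟩ := Module.Finite.exists_fin' A M
  exact of_isSaturatedEmbedding (IsSaturatedEmbedding.dualMap hπ)

end InSyzygyOfCM

section FractionRing

variable {A Q : Type*} [CommRing A] [CommRing Q] [Algebra A Q] [IsFractionRing A Q]

variable (A Q) in
theorem isTorsionFree_of_isFractionRing : Module.IsTorsionFree A Q :=
  have := IsLocalization.flat Q A⁰
  inferInstance

theorem isUnit_algebraMap_of_isRegular {a : A} (ha : IsRegular a) : IsUnit (algebraMap A Q a) :=
  IsLocalization.map_units Q (⟨a, isRegular_iff_mem_nonZeroDivisors.mp ha⟩ : A⁰)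

variable (A) in
theorem exists_isRegular_smul_eq_algebraMap (q : Q) :
    ∃ a x : A, IsRegular a ∧ a • q = algebraMap A Q x := by
  obtain ⟨⟨x, a⟩, hx⟩ := IsLocalization.surj A⁰ q
  exact ⟨a, x, isRegular_iff_mem_nonZeroDivisors.mpr a.2, by rw [Algebra.smul_def, mul_comm, hx]⟩

end FractionRing

/-- `S` is a birational extension of `R`, that is, `R ⊆ S ⊆ Q(R)` up to isomorphism. The total ring
of fractions is avoided by asking that nonzerodivisors of `R` stay nonzerodivisors in `S` and that
every element of `S` be a fraction of elements of `R`. -/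
class IsBirationalExtension (R S : Type*) [CommRing R] [CommRing S] [Algebra R S] : Prop where
  algebraMap_injective : Function.Injective (algebraMap R S)
  isRegular_algebraMap (r : R) : IsRegular r → IsRegular (algebraMap R S r)
  exists_smul_eq_algebraMap (s : S) : ∃ r x : R, IsRegular r ∧ r • s = algebraMap R S x

namespace IsBirationalExtension

variable {R S : Type*} [CommRing R] [CommRing S] [Algebra R S]

theorem of_isFractionRing (Q : Type*) [CommRing Q] [Algebra S Q] [Algebra R Q]
    [IsScalarTower R S Q] [IsFractionRing R Q] [FaithfulSMul S Q] : IsBirationalExtension R S where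
  algebraMap_injective := .of_comp (f := algebraMap S Q) (by
    rw [← RingHom.coe_comp, ← IsScalarTower.algebraMap_eq]
    exact IsFractionRing.injective R Q)
  isRegular_algebraMap r hr := by
    have hunit : IsUnit (algebraMap S Q (algebraMap R S r)) := by
      rw [← IsScalarTower.algebraMap_apply]
      exact isUnit_algebraMap_of_isRegular hr
    exact isRegular_iff_mem_nonZeroDivisors.mpr <| mem_nonZeroDivisors_of_injective
      (FaithfulSMul.algebraMap_injective S Q) hunit.mem_nonZeroDivisors
  exists_smul_eq_algebraMap s := by
    obtain ⟨r, x, hr, hx⟩ := exists_isRegular_smul_eq_algebraMap R (algebraMap S Q s)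
    refine ⟨r, x, hr, FaithfulSMul.algebraMap_injective S Q ?_⟩
    rw [Algebra.algebraMap_eq_smul_one, smul_assoc, ← Algebra.algebraMap_eq_smul_one, hx,
      IsScalarTower.algebraMap_apply R S Q]

variable [IsBirationalExtension R S]

theorem isRegular_algebraMap_iff {r : R} : IsRegular (algebraMap R S r) ↔ IsRegular r := by
  refine ⟨fun hr => ?_, isRegular_algebraMap r⟩
  rw [isRegular_iff_mem_nonZeroDivisors] at hr ⊢
  exact mem_nonZeroDivisors_of_injective (algebraMap_injective (S := S)) hr

variable (R) in
theorem exists_isRegular_smul_eq_algebraMap_of_isRegular {a : S} (ha : IsRegular a) :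
    ∃ r x : R, IsRegular r ∧ IsRegular x ∧ r • a = algebraMap R S x := by
  obtain ⟨r, x, hr, hx⟩ := exists_smul_eq_algebraMap (R := R) a
  refine ⟨r, x, hr, ?_, hx⟩
  rw [← isRegular_algebraMap_iff (S := S), ← hx, Algebra.smul_def]
  exact (isRegular_algebraMap r hr).mul ha

theorem isFractionRing (Q : Type*) [CommRing Q] [Algebra S Q] [Algebra R Q]
    [IsScalarTower R S Q] [IsFractionRing S Q] : IsFractionRing R Q where
  map_units r := by
    rw [IsScalarTower.algebraMap_apply R S Q]
    exact isUnit_algebraMap_of_isRegular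
      (isRegular_algebraMap _ (isRegular_iff_mem_nonZeroDivisors.mpr r.2))
  surj q := by
    obtain ⟨a, s, ha, has⟩ := exists_isRegular_smul_eq_algebraMap S q
    obtain ⟨r, y, -, hy, hry⟩ := exists_isRegular_smul_eq_algebraMap_of_isRegular R ha
    obtain ⟨t, x, ht, htx⟩ := exists_smul_eq_algebraMap (R := R) s
    refine ⟨⟨r * x, t * y, isRegular_iff_mem_nonZeroDivisors.mp (ht.mul hy)⟩, ?_⟩
    calc q * algebraMap R Q (t * y) = t • algebraMap R S y • q := by
          rw [mul_comm, ← Algebra.smul_def, mul_smul, algebraMap_smul]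
      _ = t • r • algebraMap S Q s := by rw [← hry, smul_assoc, has]
      _ = r • algebraMap S Q (algebraMap R S x) := by
          rw [smul_comm, ← htx, Algebra.algebraMap_eq_smul_one, Algebra.algebraMap_eq_smul_one,
            smul_assoc]
      _ = algebraMap R Q (r * x) := by
          rw [← IsScalarTower.algebraMap_apply, Algebra.smul_def, map_mul]
  exists_of_eq h := ⟨1, by
    simp only [IsScalarTower.algebraMap_apply R S Q] at h
    rw [algebraMap_injective (IsFractionRing.injective S Q h)]⟩

variable {M N : Type*} [AddCommGroup M] [Module R M] [Module S M] [IsScalarTower R S M]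
  [AddCommGroup N] [Module R N] [Module S N] [IsScalarTower R S N]

variable (R S N) in
theorem isTorsionFree_restrictScalars [Module.IsTorsionFree S N] : Module.IsTorsionFree R N :=
  .comap (algebraMap R S) isRegular_algebraMap (algebraMap_smul S)

theorem map_smul [Module.IsTorsionFree R N] (f : M →ₗ[R] N) (s : S) (m : M) :
    f (s • m) = s • f m := by
  obtain ⟨r, x, hr, hx⟩ := exists_smul_eq_algebraMap (R := R) s
  refine hr.smul_right_inj.mp ?_
  rw [← LinearMap.map_smul, ← smul_assoc, ← smul_assoc, hx, algebraMap_smul, algebraMap_smul,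
    LinearMap.map_smul]

theorem isSaturatedEmbedding_restrictScalars_iff {f : M →ₗ[S] N} :
    IsSaturatedEmbedding (f.restrictScalars R) ↔ IsSaturatedEmbedding f := by
  constructor <;> refine fun hf => ⟨hf.injective, ?_⟩
  · rintro a ha v ⟨m, hm⟩
    obtain ⟨r, x, -, hx, hrx⟩ := exists_isRegular_smul_eq_algebraMap_of_isRegular R ha
    refine hf.mem_range_of_smul_mem x hx v ⟨r • m, ?_⟩
    rw [LinearMap.map_smul, LinearMap.restrictScalars_apply, hm, ← smul_assoc, hrx,
      algebraMap_smul]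
  · intro r hr v hv
    refine hf.mem_range_of_smul_mem _ (isRegular_algebraMap r hr) v ?_
    rwa [algebraMap_smul]

end IsBirationalExtension

section OrbitMap

variable {R S M N : Type*} [CommRing R] [CommRing S] [Algebra R S] [AddCommGroup M]
  [Module R M] [Module S M] [IsScalarTower R S M] [AddCommGroup N] [Module R N]

variable (S) in
/-- The map `M → Hom_R(S, N)`, `m ↦ (s ↦ f (s • m))`, adjoint to an `R`-linear map `f` on an
`S`-module `M`. -/
def orbitMap (f : M →ₗ[R] N) : M →ₗ[R] S →ₗ[R] N :=
  (Algebra.lsmul R R M).toLinearMap.flip.compr₂ f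

@[simp]
theorem orbitMap_apply (f : M →ₗ[R] N) (m : M) (s : S) : orbitMap S f m s = f (s • m) := rfl

theorem IsSaturatedEmbedding.orbitMap [Module.IsTorsionFree R N] {f : M →ₗ[R] N}
    (hf : IsSaturatedEmbedding f) : IsSaturatedEmbedding (orbitMap S f) := by
  refine ⟨fun m m' h => hf.injective (by simpa using LinearMap.congr_fun h 1), ?_⟩
  rintro r hr φ ⟨m, hm⟩
  have hφ (s : S) : f (s • m) = r • φ s := LinearMap.congr_fun hm s
  obtain ⟨m', hm'⟩ := hf.mem_range_of_smul_mem r hr (φ 1) ⟨m, by simpa using hφ 1⟩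
  have hmm' : m = r • m' := hf.injective (by rw [map_smul, hm', ← hφ, one_smul])
  refine ⟨m', LinearMap.ext fun s => hr.smul_right_inj.mp ?_⟩
  rw [orbitMap_apply, ← map_smul, ← smul_comm s r m', ← hmm', hφ]

end OrbitMap

namespace InSyzygyOfCM

variable {R S M : Type u} [CommRing R] [CommRing S] [Algebra R S] [IsBirationalExtension R S]
  [AddCommGroup M] [Module R M] [Module S M] [IsScalarTower R S M]

theorem restrictScalars (hS : InSyzygyOfCM R S) (hM : InSyzygyOfCM S M) : InSyzygyOfCM R M := by
  obtain ⟨l, j, hj⟩ := iff_exists_isSaturatedEmbedding.mp hS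
  obtain ⟨n, f, hf⟩ := iff_exists_isSaturatedEmbedding.mp hM
  exact of_isSaturatedEmbedding ((hj.compLeft (Fin n)).comp
    (IsBirationalExtension.isSaturatedEmbedding_restrictScalars_iff.mpr hf))

theorem of_restrictScalars (e : S ≃ₗ[R] (S →ₗ[R] R)) (hM : InSyzygyOfCM R M) :
    InSyzygyOfCM S M := by
  obtain ⟨n, f, hf⟩ := iff_exists_isSaturatedEmbedding.mp hM
  let toPi : (S →ₗ[R] Fin n → R) ≃ₗ[R] Fin n → S :=
    (LinearEquiv.linearMapPi R).symm ≪≫ₗ .piCongrRight fun _ => e.symm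
  let g : M →ₗ[R] Fin n → S := toPi.toLinearMap ∘ₗ orbitMap S f
  have := IsBirationalExtension.isTorsionFree_restrictScalars R S S
  let gS : M →ₗ[S] Fin n → S := { g with map_smul' := IsBirationalExtension.map_smul g }
  have hg : IsSaturatedEmbedding (gS.restrictScalars R) :=
    (IsSaturatedEmbedding.of_linearEquiv toPi).comp hf.orbitMap
  exact of_isSaturatedEmbedding
    (IsBirationalExtension.isSaturatedEmbedding_restrictScalars_iff.mp hg)

end InSyzygyOfCM

section FractionalIdeal

open Submodule

section Colon

variable {A Q : Type*} [CommSemiring A] [CommSemiring Q] [Algebra A Q]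

theorem submodule_div_one (I : Submodule A Q) : I / 1 = I :=
  eq_of_forall_le_iff fun J => by rw [Submodule.le_div_iff_mul_le, mul_one]

theorem submodule_div_mul (I J K : Submodule A Q) : I / (J * K) = I / J / K :=
  eq_of_forall_le_iff fun L => by
    simp only [Submodule.le_div_iff_mul_le, mul_assoc, mul_comm K]

theorem submodule_div_le_div {I I' J J' : Submodule A Q} (hI : I ≤ I') (hJ : J' ≤ J) :
    I / J ≤ I' / J' :=
  fun _ hq x hx => hI (hq x (hJ hx))

end Colon

section Hom

variable {A Q : Type*} [CommRing A] [CommRing Q] [Algebra A Q] [IsFractionRing A Q]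
  {I : Submodule A Q}

theorem coe_mul_apply_comm (f : I →ₗ[A] Q) (x y : I) :
    (x : Q) * f y = y * f x := by
  obtain ⟨a, b, ha, hb⟩ := exists_isRegular_smul_eq_algebraMap A (x : Q)
  obtain ⟨c, d, hc, hd⟩ := exists_isRegular_smul_eq_algebraMap A (y : Q)
  have := isTorsionFree_of_isFractionRing A Q
  have hxy : (c * b) • y = (a * d) • x := Subtype.ext <| by
    rw [coe_smul, coe_smul, mul_comm c, mul_smul, mul_smul, hd, smul_comm a d, hb]
    simp only [Algebra.smul_def, mul_comm]
  refine (ha.mul hc).smul_right_inj.mp ?_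
  calc (a * c) • ((x : Q) * f y) = f ((c * b) • y) := by
        rw [map_smul, mul_comm a, mul_smul, mul_smul, ← smul_mul_assoc, hb, ← Algebra.smul_def]
    _ = f ((a * d) • x) := by rw [hxy]
    _ = (a * c) • ((y : Q) * f x) := by
        rw [map_smul, mul_smul, mul_smul, ← smul_mul_assoc, hd, ← Algebra.smul_def]

theorem exists_isRegular_smul_mem {u : Q} (hu : IsUnit u) (huI : u ∈ I) (d : Q) :
    ∃ r : A, IsRegular r ∧ r • d ∈ I := by
  obtain ⟨w, hw⟩ := hu.exists_left_inv
  obtain ⟨r, a, hr, ha⟩ := exists_isRegular_smul_eq_algebraMap A (d * w)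
  refine ⟨r, hr, ?_⟩
  have hd : r • d = a • u := by
    rw [Algebra.smul_def a, ← ha, smul_mul_assoc, mul_assoc, hw, mul_one]
  exact hd ▸ I.smul_mem a huI

theorem hom_apply_eq_mul {u w : Q} (hw : w * u = 1) (huI : u ∈ I) (f : I →ₗ[A] Q) (x : I) :
    f x = w * f ⟨u, huI⟩ * x := by
  rw [mul_right_comm, mul_assoc, coe_mul_apply_comm f x ⟨u, huI⟩, ← mul_assoc, hw, one_mul]

/-- The identification of the colon `J : I` with `Hom(I, J)` by multiplication, for a fractional
ideal `I` containing a unit of the total ring of fractions. -/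
noncomputable def divEquivHom (J : Submodule A Q) {u : Q} (hu : IsUnit u) (huI : u ∈ I) :
    ↥(J / I) ≃ₗ[A] (I →ₗ[A] J) :=
  LinearEquiv.ofBijective
    (LinearMap.mk₂ A (fun (q : ↥(J / I)) (x : I) => (⟨q * x, q.2 x x.2⟩ : J))
      (fun _ _ _ => Subtype.ext (add_mul _ _ _)) (fun _ _ _ => Subtype.ext (smul_mul_assoc _ _ _))
      (fun _ _ _ => Subtype.ext (mul_add _ _ _)) (fun _ _ _ => Subtype.ext (mul_smul_comm _ _ _)))
    ⟨fun _ _ h => Subtype.ext <| hu.mul_right_cancel <|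
        congrArg Subtype.val (LinearMap.congr_fun h ⟨u, huI⟩),
      fun f => by
        obtain ⟨w, hw⟩ := hu.exists_left_inv
        have hf (x : I) : (f x : Q) = w * f ⟨u, huI⟩ * x :=
          hom_apply_eq_mul hw huI (J.subtype ∘ₗ f) x
        exact ⟨⟨w * f ⟨u, huI⟩, fun x hx => hf ⟨x, hx⟩ ▸ (f ⟨x, hx⟩).2⟩,
          LinearMap.ext fun x => Subtype.ext (hf x).symm⟩⟩

variable (A Q) in
/-- The identification of the unit fractional ideal with the ring. -/
noncomputable def oneEquiv : (1 : Submodule A Q) ≃ₗ[A] A :=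
  LinearEquiv.ofEq _ _ one_eq_range ≪≫ₗ
    (LinearEquiv.ofInjective (Algebra.linearMap A Q) (IsFractionRing.injective A Q)).symm

theorem algebraMap_oneEquiv (x : (1 : Submodule A Q)) : algebraMap A Q (oneEquiv A Q x) = x :=
  congrArg Subtype.val (LinearEquiv.apply_symm_apply
    (LinearEquiv.ofInjective (Algebra.linearMap A Q) (IsFractionRing.injective A Q)) _)

/-- The identification of `1 / I` with the dual of `I` by multiplication, for a fractional ideal `I`
containing a unit of the total ring of fractions. -/
noncomputable def oneDivEquivDual {u : Q} (hu : IsUnit u) (huI : u ∈ I) :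
    ↥(1 / I) ≃ₗ[A] (I →ₗ[A] A) :=
  divEquivHom 1 hu huI ≪≫ₗ (oneEquiv A Q).congrRight

theorem algebraMap_oneDivEquivDual {u : Q} (hu : IsUnit u) (huI : u ∈ I) (q : ↥(1 / I)) (x : I) :
    algebraMap A Q (oneDivEquivDual hu huI q x) = q * x :=
  algebraMap_oneEquiv _

theorem finite_of_mul_mem_one [IsNoetherianRing A] {u : Q} (hu : IsUnit u)
    (h : ∀ x ∈ I, u * x ∈ (1 : Submodule A Q)) : Module.Finite A I := by
  have := Module.Finite.equiv (oneEquiv A Q).symm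
  exact Module.Finite.of_injective ((LinearMap.mulLeft A u).restrict h)
    fun x y hxy => Subtype.ext (hu.mul_left_cancel (congrArg Subtype.val hxy))

theorem finite_of_le_one [IsNoetherianRing A] (h : I ≤ 1) : Module.Finite A I :=
  finite_of_mul_mem_one isUnit_one (by simpa using fun x hx => h hx)

theorem finite_one_div [IsNoetherianRing A] {u : Q} (hu : IsUnit u) (huI : u ∈ I) :
    Module.Finite A ↥(1 / I) :=
  finite_of_mul_mem_one hu fun x hx => mul_comm x u ▸ mem_div_iff_forall_mul_mem.mp hx u huI

end Hom

namespace InSyzygyOfCM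

variable {A Q : Type u} [CommRing A] [CommRing Q] [Algebra A Q] [IsFractionRing A Q]
  {I : Submodule A Q}

variable (A Q) in
theorem one_submodule : InSyzygyOfCM A (1 : Submodule A Q) :=
  (of_projective A A).of_linearEquiv (oneEquiv A Q).symm

theorem one_div [Module.Finite A I] {u : Q} (hu : IsUnit u) (huI : u ∈ I) :
    InSyzygyOfCM A ↥(1 / I) :=
  (dual A I).of_linearEquiv (oneDivEquivDual hu huI).symm

theorem one_div_one_div_le (h : InSyzygyOfCM A I) {u : Q} (hu : IsUnit u) (huI : u ∈ I) :
    1 / (1 / I) ≤ I := by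
  obtain ⟨n, f, hf⟩ := iff_exists_isSaturatedEmbedding.mp h
  let e := oneDivEquivDual (A := A) hu huI
  let q (k : Fin n) : ↥(1 / I) := e.symm (LinearMap.proj k ∘ₗ f)
  have hq (k : Fin n) (x : I) : algebraMap A Q (f x k) = q k * x := by
    rw [← algebraMap_oneDivEquivDual hu huI, e.apply_symm_apply]
    rfl
  intro d hd
  choose α hα using fun k => mem_one.mp (mem_div_iff_forall_mul_mem.mp hd (q k) (q k).2)
  have := isTorsionFree_of_isFractionRing A Q
  obtain ⟨r, hr, hrd⟩ := exists_isRegular_smul_mem hu huI d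
  have hα' : f ⟨r • d, hrd⟩ = r • α := funext fun k => IsFractionRing.injective A Q <| by
    rw [hq, mul_smul_comm, mul_comm, ← hα, Pi.smul_apply, smul_eq_mul, map_mul, Algebra.smul_def]
  obtain ⟨x, hx⟩ := hf.mem_range_of_smul_mem r hr α ⟨_, hα'⟩
  have hxd : r • x = ⟨r • d, hrd⟩ := hf.injective (by rw [map_smul, hx, hα'])
  have hxd : (x : Q) = d := hr.smul_right_inj.mp (congrArg Subtype.val hxd)
  exact hxd ▸ x.2

end InSyzygyOfCM

end FractionalIdeal

section DimensionOne

open IsLocalization Submodule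

theorem krullDimLE_of_isIntegral (R S : Type*) [CommRing R] [CommRing S] [Algebra R S]
    [Algebra.IsIntegral R S] (n : ℕ) [h : Ring.KrullDimLE n R] : Ring.KrullDimLE n S := by
  rw [Ring.krullDimLE_iff] at h ⊢
  exact (Order.krullDim_le_of_strictMono (PrimeSpectrum.comap (algebraMap R S))
    fun _ _ => Ideal.IsIntegral.comap_lt_comap).trans h

theorem finite_maximalSpectrum_of_finite (R S : Type*) [CommRing R] [CommRing S] [Algebra R S]
    [Module.Finite R S] [Finite (MaximalSpectrum R)] : Finite (MaximalSpectrum S) := by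
  let t := PrimeSpectrum.comap (algebraMap R S) ⁻¹' Set.range MaximalSpectrum.toPrimeSpectrum
  have : Finite t := (Algebra.QuasiFinite.finite_comap_preimage (Set.finite_range _)).to_subtype
  have hmax (m : MaximalSpectrum S) : (m.asIdeal.comap (algebraMap R S)).IsMaximal :=
    have := m.isMaximal
    Ideal.isMaximal_comap_of_isIntegral_of_isMaximal m.asIdeal
  exact Finite.of_injective
    (f := Set.codRestrict MaximalSpectrum.toPrimeSpectrum t fun m => ⟨⟨_, hmax m⟩, rfl⟩)
    ((Set.injective_codRestrict _).mpr MaximalSpectrum.toPrimeSpectrum_injective)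

variable {A : Type*} [CommRing A] [IsNoetherianRing A]

theorem mem_associatedPrimes_quotient_span_singleton [Ring.KrullDimLE 1 A]
    {a : A} (ha : IsRegular a) {p : Ideal A} [hp : p.IsPrime] (hap : a ∈ p) :
    p ∈ associatedPrimes A (A ⧸ Ideal.span {a}) := by
  apply Module.associatedPrimes.minimalPrimes_annihilator_subset_associatedPrimes
  rw [Ideal.annihilator_quotient]
  refine ⟨⟨hp, (Ideal.span_singleton_le_iff_mem p).mpr hap⟩, fun q hq hqp => ?_⟩
  have haq : a ∈ q := (Ideal.span_singleton_le_iff_mem q).mp hq.2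
  obtain hqmin | hqmax := Ring.krullDimLE_one_iff.mp ‹_› q hq.1
  · exact absurd ha.mem_nonZeroDivisors
      (Set.disjoint_left.mp (Ideal.disjoint_nonZeroDivisors_of_mem_minimalPrimes hqmin) haq)
  · exact (hqmax.eq_of_le hp.ne_top hqp).ge

theorem not_one_div_coeSubmodule_le_one_of_mem_associatedPrimes (Q : Type*) [CommRing Q]
    [Algebra A Q] [IsFractionRing A Q] {a : A} (ha : IsRegular a) {p : Ideal A}
    (hp : p ∈ associatedPrimes A (A ⧸ Ideal.span {a})) :
    ¬ 1 / coeSubmodule Q p ≤ 1 := by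
  rw [AssociatedPrimes.mem_iff, isAssociatedPrime_iff] at hp
  obtain ⟨hprime, x, hx⟩ := hp
  induction x using Submodule.Quotient.induction_on with | H x => ?_
  have mem_p (b : A) : b ∈ p ↔ a ∣ b * x := by
    rw [hx, mem_colon_singleton, mem_bot, ← Quotient.mk_smul, Quotient.mk_eq_zero,
      Ideal.mem_span_singleton, smul_eq_mul]
  obtain ⟨w, hw⟩ := (isUnit_algebraMap_of_isRegular (Q := Q) ha).exists_right_inv
  have hxw : algebraMap A Q x * w ∈ 1 / coeSubmodule Q p := by
    refine mem_div_iff_forall_mul_mem.mpr fun q hq => ?_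
    obtain ⟨b, hb, rfl⟩ := (mem_coeSubmodule _ _).mp hq
    obtain ⟨d, hd⟩ := (mem_p b).mp hb
    refine mem_one.mpr ⟨d, ?_⟩
    rw [mul_right_comm, ← map_mul, mul_comm x, hd, map_mul, mul_right_comm, hw, one_mul]
  intro h
  obtain ⟨y, hy⟩ := mem_one.mp (h hxw)
  refine hprime.ne_top ((Ideal.eq_top_iff_one p).mpr ((mem_p 1).mpr ⟨y, ?_⟩))
  apply IsFractionRing.injective A Q
  rw [one_mul, map_mul, hy, mul_left_comm, hw, mul_one]

theorem eq_one_of_one_div_le_one {Q : Type*} [CommRing Q] [Algebra A Q] [IsFractionRing A Q]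
    [Ring.KrullDimLE 1 A] {J : Submodule A Q} {u : Q} (hu : IsUnit u) (huJ : u ∈ J) (hJ : J ≤ 1)
    (h : 1 / J ≤ 1) : J = 1 := by
  obtain ⟨a, ha, haJ⟩ := exists_isRegular_smul_mem hu huJ 1
  obtain ⟨I, rfl⟩ : ∃ I : Ideal A, coeSubmodule Q I = J :=
    ⟨J.comap (Algebra.linearMap A Q), map_comap_eq_of_le (one_eq_range (R := A) (A := Q) ▸ hJ)⟩
  by_contra hne
  have hI : I ≠ ⊤ := fun hI => hne (hI ▸ coeSubmodule_top _)
  obtain ⟨m, hm, hIm⟩ := Ideal.exists_le_maximal I hI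
  have ham : a ∈ m := by
    obtain ⟨b, hb, hba⟩ := (mem_coeSubmodule _ _).mp haJ
    rw [← Algebra.algebraMap_eq_smul_one] at hba
    exact hIm (IsFractionRing.injective A Q hba ▸ hb)
  exact not_one_div_coeSubmodule_le_one_of_mem_associatedPrimes Q ha
    (mem_associatedPrimes_quotient_span_singleton ha ham)
    ((submodule_div_le_div le_rfl (coeSubmodule_mono Q hIm)).trans h)

end DimensionOne

section Invertibility

open Submodule

theorem mul_one_div_eq_one_of_reflexive {A Q : Type u} [CommRing A] [CommRing Q] [Algebra A Q]
    [IsFractionRing A Q] [IsNoetherianRing A] [Ring.KrullDimLE 1 A] {c : Submodule A Q} {u : Q}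
    (hu : IsUnit u) (huc : u ∈ c) (hc : c ≤ 1) (hcc : 1 / (1 / c) ≤ c)
    (h : ∀ D : Submodule A Q, Module.Finite A D → InSyzygyOfCM A D →
      (∃ v ∈ D, IsUnit v) → c / (c / D) ≤ D) :
    c * (1 / c) = 1 := by
  set J := c * (1 / c)
  have huJ : u ∈ J := mul_one u ▸ mul_mem_mul huc (one_mem_div.mpr hc)
  have hJ : J ≤ 1 := mul_one_div_le_one
  have h1J : (1 : Q) ∈ 1 / J := one_mem_div.mpr hJ
  have hJD : J ≤ 1 / (1 / J) := le_div_iff_mul_le.mpr mul_one_div_le_one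
  have hcc' : c / c ≤ 1 := by
    simpa only [submodule_div_one] using h 1 (finite_of_le_one le_rfl) (.one_submodule A Q)
      ⟨1, one_le.mp le_rfl, isUnit_one⟩
  have := finite_one_div hu huJ
  have hD : c / (c / (1 / (1 / J))) ≤ 1 / (1 / J) :=
    h _ (finite_one_div isUnit_one h1J) (.one_div isUnit_one h1J) ⟨u, hJD huJ, hu⟩
  have hcD : c / (1 / (1 / J)) ≤ c :=
    calc c / (1 / (1 / J)) ≤ c / J := submodule_div_le_div le_rfl hJD
      _ = c / c / (1 / c) := submodule_div_mul c c (1 / c)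
      _ ≤ 1 / (1 / c) := submodule_div_le_div hcc' le_rfl
      _ ≤ c := hcc
  have h1D : (1 : Q) ∈ 1 / (1 / J) := hD (one_mem_div.mpr hcD)
  exact eq_one_of_one_div_le_one hu huJ hJ (one_mem_div.mp h1D)

theorem nonempty_linearEquiv_of_mul_eq_one {A Q : Type*} [CommRing A] [CommRing Q] [Algebra A Q]
    [FaithfulSMul A Q] [Subsingleton (CommRing.Pic A)] {I J : Submodule A Q} (h : I * J = 1) :
    Nonempty (I ≃ₗ[A] A) := by
  obtain ⟨U, rfl⟩ : IsUnit I := .of_mul_eq_one J h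
  exact CommRing.Pic.mk_eq_one_iff.mp
    (Subsingleton.elim (CommRing.Pic.mk A (U : Submodule A Q)) 1)

end Invertibility

section BirationalConductor

open Submodule

variable (R S Q : Type*) [CommRing R] [CommRing S] [CommRing Q] [Algebra R S] [Algebra S Q]
  [Algebra R Q] [IsScalarTower R S Q]

/-- The conductor `R : S` of a birational extension `R ⊆ S` with total ring of fractions `Q`, as an
`S`-submodule of `Q`. -/
def birationalConductor : Submodule S Q where
  carrier := {q | ∀ s : S, s • q ∈ (1 : Submodule R Q)}
  add_mem' {x y} hx hy s := by
    rw [smul_add]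
    exact add_mem (hx s) (hy s)
  zero_mem' s := by
    rw [smul_zero]
    exact zero_mem _
  smul_mem' t q hq s := by
    rw [smul_smul]
    exact hq (s * t)

variable {R S Q}

theorem restrictScalars_birationalConductor_div (I : Submodule S Q) :
    (birationalConductor R S Q / I).restrictScalars R = 1 / I.restrictScalars R := by
  ext q
  simp only [restrictScalars_mem, mem_div_iff_forall_mul_mem]
  refine ⟨fun h x hx => one_smul S (q * x) ▸ h x hx 1, fun h x hx s => ?_⟩
  exact mul_smul_comm s q x ▸ h (s • x) (I.smul_mem s hx)

theorem restrictScalars_birationalConductor :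
    (birationalConductor R S Q).restrictScalars R =
      1 / (1 : Submodule S Q).restrictScalars R := by
  rw [← restrictScalars_birationalConductor_div, submodule_div_one]

theorem birationalConductor_le_one : birationalConductor R S Q ≤ 1 := fun q hq => by
  obtain ⟨r, hr⟩ := mem_one.mp (one_smul S q ▸ hq 1)
  exact mem_one.mpr ⟨algebraMap R S r, by rw [← hr, IsScalarTower.algebraMap_apply R S Q]⟩

variable [IsFractionRing R Q]

variable (R S Q) in
theorem exists_isUnit_mem_birationalConductor [Module.Finite R S] :
    ∃ u ∈ birationalConductor R S Q, IsUnit u := by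
  have hfg : (LinearMap.range (IsScalarTower.toAlgHom R S Q).toLinearMap).FG :=
    Module.Finite.iff_fg.mp inferInstance
  obtain ⟨a, ha, h⟩ := FractionalIdeal.isFractional_of_fg (S := R⁰) hfg
  refine ⟨algebraMap R Q a, fun s => ?_, IsLocalization.map_units Q ⟨a, ha⟩⟩
  obtain ⟨x, hx⟩ := h _ ⟨s, rfl⟩
  refine mem_one.mpr ⟨x, hx.trans ?_⟩
  rw [Algebra.smul_def, Algebra.smul_def, mul_comm]
  rfl

variable (R S Q) in
/-- The identification of the conductor with the dual of `S`. -/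
noncomputable def birationalConductorEquivDual [IsFractionRing S Q] :
    birationalConductor R S Q ≃ₗ[R] (S →ₗ[R] R) :=
  LinearEquiv.ofEq _ _ restrictScalars_birationalConductor ≪≫ₗ
    oneDivEquivDual isUnit_one (one_le.mp le_rfl : (1 : Q) ∈ (1 : Submodule S Q)) ≪≫ₗ
    ((oneEquiv S Q).restrictScalars R).congrLeft R R

end BirationalConductor

section Duality

open Submodule

variable {R S Q : Type u} [CommRing R] [CommRing S] [CommRing Q] [Algebra R S] [Algebra S Q]
  [Algebra R Q] [IsScalarTower R S Q] [IsFractionRing R Q]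

theorem InSyzygyOfCM.birationalConductor_div_div_le {I : Submodule S Q} (h : InSyzygyOfCM R I)
    {u : Q} (hu : IsUnit u) (huI : u ∈ I) :
    birationalConductor R S Q / (birationalConductor R S Q / I) ≤ I := by
  rw [← restrictScalars_le R, restrictScalars_birationalConductor_div,
    restrictScalars_birationalConductor_div]
  exact one_div_one_div_le (I := I.restrictScalars R) h hu huI

theorem nonempty_linearEquiv_dual_of_birationalConductor_mul_eq_one [IsFractionRing S Q]
    [Subsingleton (CommRing.Pic S)] {J : Submodule S Q} (h : birationalConductor R S Q * J = 1) :
    Nonempty (S ≃ₗ[R] (S →ₗ[R] R)) := by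
  obtain ⟨e⟩ := nonempty_linearEquiv_of_mul_eq_one h
  exact ⟨e.symm.restrictScalars R ≪≫ₗ birationalConductorEquivDual R S Q⟩

variable (R S Q) in
theorem birationalConductor_mul_one_div_eq_one [IsFractionRing S Q] [IsNoetherianRing S]
    [Ring.KrullDimLE 1 S] [Module.Finite R S]
    (h : ∀ D : Submodule S Q, Module.Finite S D → (InSyzygyOfCM S D ↔ InSyzygyOfCM R D)) :
    birationalConductor R S Q * (1 / birationalConductor R S Q) = 1 := by
  obtain ⟨u, huc, hu⟩ := exists_isUnit_mem_birationalConductor R S Q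
  have hc : InSyzygyOfCM S (birationalConductor R S Q) :=
    (h _ (finite_of_le_one birationalConductor_le_one)).mpr
      ((InSyzygyOfCM.dual R S).of_linearEquiv (birationalConductorEquivDual R S Q).symm)
  refine mul_one_div_eq_one_of_reflexive hu huc birationalConductor_le_one
    (hc.one_div_one_div_le hu huc) ?_
  rintro D hD hDS ⟨v, hvD, hv⟩
  exact ((h D hD).mp hDS).birationalConductor_div_div_le hv hvD

end Duality

theorem selfdual_iff_syzygyCM_eq_general (R S : Type u) [CommRing R] [CommRing S] [Algebra R S]
    [IsBirationalExtension R S] [IsNoetherianRing R] [Ring.KrullDimLE 1 R] [Module.Finite R S]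
    [Subsingleton (CommRing.Pic S)] :
    Nonempty (S ≃ₗ[R] (S →ₗ[R] R)) ↔
      ∀ (M : Type u) [AddCommGroup M] [Module R M] [Module S M] [IsScalarTower R S M],
        Module.Finite S M →
          (InSyzygyOfCM S M ↔ (IsTorsionFreeModule S M ∧ InSyzygyOfCM R M)) := by
  constructor
  · rintro ⟨e⟩ M _ _ _ _ -
    have hS : InSyzygyOfCM R S := (InSyzygyOfCM.dual R S).of_linearEquiv e.symm
    exact ⟨fun hM => ⟨isTorsionFreeModule_iff.mpr hM.isTorsionFree, hS.restrictScalars hM⟩,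
      fun hM => hM.2.of_restrictScalars e⟩
  · intro h
    have := IsNoetherianRing.of_finite R S
    have := krullDimLE_of_isIntegral R S 1
    have := IsBirationalExtension.isFractionRing (R := R) (S := S) (FractionRing S)
    refine nonempty_linearEquiv_dual_of_birationalConductor_mul_eq_one
      (birationalConductor_mul_one_div_eq_one R S (FractionRing S) fun D hD => ?_)
    have := isTorsionFree_of_isFractionRing S (FractionRing S)
    rw [h D hD, and_iff_right (isTorsionFreeModule_iff.mpr inferInstance)]

/-- `S ≅ Hom_R(S, R)` iff `Ω CM(S) = CM(S) ∩ Ω CM(R)`, i.e. a finitely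
generated `S`-module lies in `Ω CM(S)` exactly when it is torsion-free over `S` and
lies in `Ω CM(R)`. -/
theorem selfdual_iff_syzygyCM_eq (R : Type u) [CommRing R]
    (hCM : IsCohenMacaulayLocalRing R) (hdim : ringKrullDim R = 1)
    (hGG : IsGenericallyGorenstein R)
    (S : Subalgebra R (FractionRing R)) (hfin : Module.Finite R S) :
    Nonempty (S ≃ₗ[R] (S →ₗ[R] R)) ↔
      ∀ (M : Type u) [AddCommGroup M] [Module R M] [Module S M] [IsScalarTower R S M],
        Module.Finite S M →
          (InSyzygyOfCM S M ↔ (IsTorsionFreeModule S M ∧ InSyzygyOfCM R M)) := by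
  obtain ⟨_, _, -⟩ := hCM
  have : Ring.KrullDimLE 1 R := Ring.krullDimLE_iff.mpr hdim.le
  have : IsBirationalExtension R S := .of_isFractionRing (FractionRing R)
  have : Finite (MaximalSpectrum S) := finite_maximalSpectrum_of_finite R S
  exact selfdual_iff_syzygyCM_eq_general R S
end
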